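/- Let C be a regular Ord-category, R, S: X ↬ Y ideals, and g: B→Y, f: A→X, k: Y→B, h: X→A morphisms. Then: (1) g^*∘(R∧S) ≅ (g^*∘R) ∧ (g^*∘S); (2) (R∧S)∘f_* ≅ (R∘f_*) ∧ (S∘f_*); (3) k_*∘(R∧S) ⊆ (k_*∘R) ∧ (k_*∘S); (4) (R∧S)∘h^* ⊆ (R∘h^*) ∧ (S∘h^*). -/

import Mathlib

open CategoryTheory

universe w v u

/-- An `Ord`-enrichment of a category: a preorder on each hom-set,
preserved by composition on both sides. -/
class OrdEnrichment (C : Type u) [Category.{v} C] : Type (max u v) where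
  ord : ∀ {X Y : C}, (X ⟶ Y) → (X ⟶ Y) → Prop
  ord_refl : ∀ {X Y : C} (f : X ⟶ Y), ord f f
  ord_trans : ∀ {X Y : C} {f g h : X ⟶ Y}, ord f g → ord g h → ord f h
  precomp_ord : ∀ {X Y Z : C} (e : X ⟶ Y) {f g : Y ⟶ Z}, ord f g → ord (e ≫ f) (e ≫ g)
  postcomp_ord : ∀ {X Y Z : C} {f g : X ⟶ Y} (h : Y ⟶ Z), ord f g → ord (f ≫ h) (g ≫ h)

/-- The preorder on hom-sets of an `Ord`-category. -/
def homLe {C : Type u} [Category.{v} C] [OrdEnrichment C] {X Y : C} (f g : X ⟶ Y) : Prop :=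
  OrdEnrichment.ord f g

infixl:50 " ≼ " => homLe

section

variable {C : Type u} [Category.{v} C] [OrdEnrichment C]

/-- A full (ff-) morphism. -/
def IsFF {X Y : C} (m : X ⟶ Y) : Prop :=
  ∀ {A : C} (a a' : A ⟶ X), (a ≫ m) ≼ (a' ≫ m) → a ≼ a'

/-- An ff-monomorphism: a full monomorphism. -/
def IsFFMono {X Y : C} (m : X ⟶ Y) : Prop := IsFF m ∧ Mono m

/-- An so-morphism: a morphism left orthogonal to every ff-monomorphism. -/
def IsSO {A B : C} (e : A ⟶ B) : Prop :=
  ∀ {X Y : C} (m : X ⟶ Y), IsFFMono m → ∀ (u : A ⟶ X) (v : B ⟶ Y),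
    u ≫ m = e ≫ v → ∃ d : B ⟶ X, e ≫ d = u ∧ d ≫ m = v

/-- The (strict) comma object square for the ordered pair `(f, g)`. -/
structure IsCommaSq {X Y Z : C} (f : X ⟶ Y) (g : Z ⟶ Y) (P : C)
    (π₁ : P ⟶ X) (π₂ : P ⟶ Z) : Prop where
  le : (π₁ ≫ f) ≼ (π₂ ≫ g)
  lift : ∀ {A : C} (α : A ⟶ X) (β : A ⟶ Z), (α ≫ f) ≼ (β ≫ g) →
    ∃! h : A ⟶ P, h ≫ π₁ = α ∧ h ≫ π₂ = β
  lift_ord : ∀ {A : C} {h h' : A ⟶ P}, (h ≫ π₁) ≼ (h' ≫ π₁) → (h ≫ π₂) ≼ (h' ≫ π₂) → h ≼ h'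

/-- A 2-pullback square (pullback with the `Ord`-enriched universal property). -/
structure Is2Pullback {X Y Z : C} (f : X ⟶ Z) (g : Y ⟶ Z) (P : C)
    (p : P ⟶ X) (q : P ⟶ Y) : Prop where
  comm : p ≫ f = q ≫ g
  lift : ∀ {A : C} (a : A ⟶ X) (b : A ⟶ Y), a ≫ f = b ≫ g →
    ∃! h : A ⟶ P, h ≫ p = a ∧ h ≫ q = b
  lift_ord : ∀ {A : C} {h h' : A ⟶ P}, (h ≫ p) ≼ (h' ≫ p) → (h ≫ q) ≼ (h' ≫ q) → h ≼ h'

/-- A binary 2-product. -/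
structure Is2Product (X Y : C) (P : C) (p : P ⟶ X) (q : P ⟶ Y) : Prop where
  lift : ∀ {A : C} (a : A ⟶ X) (b : A ⟶ Y), ∃! h : A ⟶ P, h ≫ p = a ∧ h ≫ q = b
  lift_ord : ∀ {A : C} {h h' : A ⟶ P}, (h ≫ p) ≼ (h' ≫ p) → (h ≫ q) ≼ (h' ≫ q) → h ≼ h'

/-- A 2-equalizer. -/
structure Is2Equalizer {X Y : C} (f g : X ⟶ Y) (E : C) (i : E ⟶ X) : Prop where
  comm : i ≫ f = i ≫ g
  lift : ∀ {A : C} (a : A ⟶ X), a ≫ f = a ≫ g → ∃! h : A ⟶ E, h ≫ i = a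
  lift_ord : ∀ {A : C} {h h' : A ⟶ E}, (h ≫ i) ≼ (h' ≫ i) → h ≼ h'

/-- A bicoinserter of a parallel pair. -/
structure IsBicoinserter {X A E : C} (a b : X ⟶ A) (e : A ⟶ E) : Prop where
  le : (a ≫ e) ≼ (b ≫ e)
  desc : ∀ {F : C} (f : A ⟶ F), (a ≫ f) ≼ (b ≫ f) →
    ∃ t : E ⟶ F, (e ≫ t) ≼ f ∧ f ≼ (e ≫ t)
  desc_ord : ∀ {F : C} {f f' : A ⟶ F} {t t' : E ⟶ F},
    (e ≫ t) ≼ f → f ≼ (e ≫ t) → (e ≫ t') ≼ f' → f' ≼ (e ≫ t') → f ≼ f' → t ≼ t'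

/-- A relation from `X` to `Y` in an `Ord`-category: a jointly ff-monomorphic span. -/
structure RelStr (X Y : C) : Type (max u v) where
  obj : C
  p : obj ⟶ X
  q : obj ⟶ Y
  jointly_ff : ∀ {A : C} (a a' : A ⟶ obj), (a ≫ p) ≼ (a' ≫ p) → (a ≫ q) ≼ (a' ≫ q) → a ≼ a'
  jointly_mono : ∀ {A : C} (a a' : A ⟶ obj), a ≫ p = a' ≫ p → a ≫ q = a' ≫ q → a = a'

/-- `(x, y) ∈_A R`. -/
def RelStr.Mem {X Y : C} (R : RelStr X Y) {A : C} (x : A ⟶ X) (y : A ⟶ Y) : Prop :=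
  ∃ h : A ⟶ R.obj, h ≫ R.p = x ∧ h ≫ R.q = y

/-- `R ⊆ S`: `R` factors through `S` (over `X × Y`). -/
def RelStr.Sub {X Y : C} (R S : RelStr X Y) : Prop :=
  ∃ φ : R.obj ⟶ S.obj, φ ≫ S.p = R.p ∧ φ ≫ S.q = R.q

/-- `R ≅ S`: mutual factorisation. -/
def RelStr.Iso {X Y : C} (R S : RelStr X Y) : Prop := R.Sub S ∧ S.Sub R

/-- The opposite relation `R°`. -/
def RelStr.op {X Y : C} (R : RelStr X Y) : RelStr Y X where
  obj := R.obj
  p := R.q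
  q := R.p
  jointly_ff := fun a a' h1 h2 => R.jointly_ff a a' h2 h1
  jointly_mono := fun a a' h1 h2 => R.jointly_mono a a' h2 h1

/-- A relation is an (order) ideal when it is closed under lowering the first
coordinate and raising the second coordinate. -/
def IsIdealRel {X Y : C} (R : RelStr X Y) : Prop :=
  ∀ {A : C} (x x' : A ⟶ X) (y y' : A ⟶ Y), x' ≼ x → R.Mem x y → y ≼ y' → R.Mem x' y'

/-- The relation `f_♯` given by the span `(1_X, f)`. -/
def sharpRel {X Y : C} (f : X ⟶ Y) : RelStr X Y where
  obj := X
  p := 𝟙 X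
  q := f
  jointly_ff := fun a a' h1 _ => by simpa using h1
  jointly_mono := fun a a' h1 _ => by simpa using h1

/-- The relation `f°`, the opposite of `f_♯`. -/
def cosharpRel {X Y : C} (f : X ⟶ Y) : RelStr Y X := (sharpRel f).op

/-- `M` is the meet (intersection) `R ∧ S` of two relations. -/
def IsMeetRel {X Y : C} (R S M : RelStr X Y) : Prop :=
  M.Sub R ∧ M.Sub S ∧
    ∀ {A : C} (x : A ⟶ X) (y : A ⟶ Y), R.Mem x y → S.Mem x y → M.Mem x y

/-- `T` is the composite `S ∘ R` of the relations `R : X ↬ Y` and `S : Y ↬ Z`,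
obtained via the (so-morphism, ff-monomorphism) factorisation of the span
given by the 2-pullback over the middle object. -/
def IsCompositeRel {X Y Z : C} (R : RelStr X Y) (S : RelStr Y Z) (T : RelStr X Z) : Prop :=
  ∃ (P : C) (p₁ : P ⟶ R.obj) (p₂ : P ⟶ S.obj) (e : P ⟶ T.obj),
    Is2Pullback R.q S.p P p₁ p₂ ∧ IsSO e ∧ e ≫ T.p = p₁ ≫ R.p ∧ e ≫ T.q = p₂ ≫ S.q

/-- `R` is the ideal `f_* = f / 1_Y : X ↬ Y`. -/
def IsStarRel {X Y : C} (f : X ⟶ Y) (R : RelStr X Y) : Prop :=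
  IsCommaSq f (𝟙 Y) R.obj R.p R.q

/-- `R` is the ideal `f^* = 1_Y / f : Y ↬ X`. -/
def IsCostarRel {X Y : C} (f : X ⟶ Y) (R : RelStr Y X) : Prop :=
  IsCommaSq (𝟙 Y) f R.obj R.p R.q

/-- `R` is the identity ideal `I_X = 1_X / 1_X`. -/
def IsIdRel (X : C) (R : RelStr X X) : Prop :=
  IsCommaSq (𝟙 X) (𝟙 X) R.obj R.p R.q

/-- `S` is the 2-pullback of the relation `R ↣ X × Y` along `f × g`. -/
def IsRelPullback {X Y U V : C} (R : RelStr X Y) (f : U ⟶ X) (g : V ⟶ Y)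
    (S : RelStr U V) : Prop :=
  ∃ h : S.obj ⟶ R.obj, h ≫ R.p = S.p ≫ f ∧ h ≫ R.q = S.q ≫ g ∧
    ∀ {A : C} (a : A ⟶ U) (b : A ⟶ V) (c : A ⟶ R.obj),
      c ≫ R.p = a ≫ f → c ≫ R.q = b ≫ g →
      ∃ d : A ⟶ S.obj, d ≫ S.p = a ∧ d ≫ S.q = b ∧ d ≫ h = c

/-- A binary 2-coproduct. -/
structure Is2Coproduct (X Y : C) (P : C) (i : X ⟶ P) (j : Y ⟶ P) : Prop where
  desc : ∀ {A : C} (a : X ⟶ A) (b : Y ⟶ A), ∃! h : P ⟶ A, i ≫ h = a ∧ j ≫ h = b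
  desc_ord : ∀ {A : C} {h h' : P ⟶ A}, (i ≫ h) ≼ (i ≫ h') → (j ≫ h) ≼ (j ≫ h') → h ≼ h'

/-- A ternary 2-coproduct. -/
structure Is3Coproduct (X Y Z : C) (P : C) (i : X ⟶ P) (j : Y ⟶ P) (k : Z ⟶ P) : Prop where
  desc : ∀ {A : C} (a : X ⟶ A) (b : Y ⟶ A) (c : Z ⟶ A),
    ∃! h : P ⟶ A, i ≫ h = a ∧ j ≫ h = b ∧ k ≫ h = c
  desc_ord : ∀ {A : C} {h h' : P ⟶ A},
    (i ≫ h) ≼ (i ≫ h') → (j ≫ h) ≼ (j ≫ h') → (k ≫ h) ≼ (k ≫ h') → h ≼ h'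

/-- Reflexivity of a relation on `X`: the diagonal factors through it. -/
def ReflexiveRel {X : C} (R : RelStr X X) : Prop := R.Mem (𝟙 X) (𝟙 X)

/-- Transitivity of a relation on `X`: `R ∘ R ⊆ R`. -/
def TransitiveRel {X : C} (R : RelStr X X) : Prop :=
  ∀ T : RelStr X X, IsCompositeRel R R T → T.Sub R

/-- A congruence: a reflexive and transitive ideal. -/
def IsCongruence {X : C} (R : RelStr X X) : Prop :=
  IsIdealRel R ∧ ReflexiveRel R ∧ TransitiveRel R

/-- An effective congruence: `R ≅ f^* ∘ f_*` for some morphism `f`. -/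
def EffectiveCongruence {X : C} (R : RelStr X X) : Prop :=
  ∃ (Y : C) (f : X ⟶ Y) (Fstar : RelStr X Y) (Fco : RelStr Y X) (T : RelStr X X),
    IsStarRel f Fstar ∧ IsCostarRel f Fco ∧ IsCompositeRel Fstar Fco T ∧ R.Iso T

/-- The `Ord`-enriched difunctionality property of a relation. -/
def OrdDifunctional {X Y : C} (D : RelStr X Y) : Prop :=
  ∀ {A : C} (x u u' : A ⟶ X) (y y' v : A ⟶ Y),
    D.Mem x y → y ≼ y' → D.Mem u y' → u ≼ u' → D.Mem u' v → D.Mem x v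

end

/-- A regular `Ord`-category: finite weighted limits, an
(so-morphism, ff-monomorphism) factorisation system, so-morphisms stable under
2-pullbacks, and every so-morphism the bicoinserter of its comma object projections. -/
structure IsRegularOrd (C : Type u) [Category.{v} C] [OrdEnrichment C] : Prop where
  hasTerminal : ∃ T : C, ∀ A : C, ∃ f : A ⟶ T, ∀ g : A ⟶ T, g = f
  has2Products : ∀ X Y : C, ∃ (P : C) (p : P ⟶ X) (q : P ⟶ Y), Is2Product X Y P p q
  has2Equalizers : ∀ {X Y : C} (f g : X ⟶ Y), ∃ (E : C) (i : E ⟶ X), Is2Equalizer f g E i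
  has2Pullbacks : ∀ {X Y Z : C} (f : X ⟶ Z) (g : Y ⟶ Z),
    ∃ (P : C) (p : P ⟶ X) (q : P ⟶ Y), Is2Pullback f g P p q
  hasCommaObjects : ∀ {X Y Z : C} (f : X ⟶ Y) (g : Z ⟶ Y),
    ∃ (P : C) (p : P ⟶ X) (q : P ⟶ Z), IsCommaSq f g P p q
  fact : ∀ {X Y : C} (f : X ⟶ Y), ∃ (I : C) (e : X ⟶ I) (m : I ⟶ Y),
    IsSO e ∧ IsFFMono m ∧ e ≫ m = f
  so_pullback_stable : ∀ {X Y Z P : C} (f : X ⟶ Z) (g : Y ⟶ Z) (p : P ⟶ X) (q : P ⟶ Y),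
    Is2Pullback f g P p q → IsSO g → IsSO p
  so_bicoinserter : ∀ {A B P : C} (e : A ⟶ B), IsSO e →
    ∀ (π₁ π₂ : P ⟶ A), IsCommaSq e e P π₁ π₂ → IsBicoinserter π₁ π₂ e

/-- An `Ord`-Mal'tsev category: every ideal is `Ord`-difunctional. -/
def IsOrdMaltsev (C : Type u) [Category.{v} C] [OrdEnrichment C] : Prop :=
  ∀ (X Y : C) (D : RelStr X Y), IsIdealRel D → OrdDifunctional D

/-- An `Ord`-W-Mal'tsev object: every ideal is `Ord`-difunctional with respect to
generalised elements with domain `Y`. -/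
def IsOrdWMaltsevObj {C : Type u} [Category.{v} C] [OrdEnrichment C] (Y : C) : Prop :=
  ∀ (X Z : C) (R : RelStr X Z), IsIdealRel R →
    ∀ (x u u' : Y ⟶ X) (z z' v : Y ⟶ Z),
      R.Mem x z → z ≼ z' → R.Mem u z' → u ≼ u' → R.Mem u' v → R.Mem x v


section helpers

variable {C : Type u} [Category.{v} C] [OrdEnrichment C]

theorem RelStr.Mem.precomp {X Y : C} {R : RelStr X Y} {A D : C} {x : A ⟶ X} {y : A ⟶ Y}
    (hm : R.Mem x y) (e : D ⟶ A) : R.Mem (e ≫ x) (e ≫ y) := by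
  obtain ⟨t, rfl, rfl⟩ := hm
  exact ⟨e ≫ t, by simp, by simp⟩

theorem RelStr.Sub.mem {X Y : C} {R S : RelStr X Y} (hs : R.Sub S) {A : C} {x : A ⟶ X}
    {y : A ⟶ Y} (hm : R.Mem x y) : S.Mem x y := by
  obtain ⟨φ, h1, h2⟩ := hs
  obtain ⟨t, rfl, rfl⟩ := hm
  exact ⟨t ≫ φ, by simp [h1], by simp [h2]⟩

/-- Membership in a relation descends along so-morphisms. -/
theorem mem_of_so (hC : IsRegularOrd C) {X Y : C} (R : RelStr X Y) {D E : C} (e : D ⟶ E)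
    (he : IsSO e) (x : E ⟶ X) (y : E ⟶ Y) (hm : R.Mem (e ≫ x) (e ≫ y)) : R.Mem x y := by
  obtain ⟨P, p, q, hP⟩ := hC.has2Products X Y
  obtain ⟨m, ⟨hm1, hm2⟩, -⟩ := hP.lift R.p R.q
  obtain ⟨w, ⟨hw1, hw2⟩, -⟩ := hP.lift x y
  obtain ⟨t, ht1, ht2⟩ := hm
  have hff : IsFFMono m := by
    constructor
    · intro A a a' haa
      have e1 := OrdEnrichment.postcomp_ord p haa
      have e2 := OrdEnrichment.postcomp_ord q haa
      simp only [Category.assoc, hm1, hm2] at e1 e2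
      exact R.jointly_ff a a' e1 e2
    · constructor
      intro A a a' haa
      apply R.jointly_mono
      · rw [← hm1, ← Category.assoc, haa, Category.assoc]
      · rw [← hm2, ← Category.assoc, haa, Category.assoc]
  have hsq : t ≫ m = e ≫ w := by
    obtain ⟨z, -, hz⟩ := hP.lift (e ≫ x) (e ≫ y)
    rw [hz (t ≫ m) ⟨by simp [hm1, ht1], by simp [hm2, ht2]⟩,
      hz (e ≫ w) ⟨by simp [hw1], by simp [hw2]⟩]
  obtain ⟨d, -, hd⟩ := he m hff t w hsq
  refine ⟨d, ?_, ?_⟩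
  · rw [← hm1, ← Category.assoc, hd, hw1]
  · rw [← hm2, ← Category.assoc, hd, hw2]

theorem comp_mem {X Y Z : C} {R : RelStr X Y} {S : RelStr Y Z} {T : RelStr X Z}
    (hT : IsCompositeRel R S T) {D : C} {x : D ⟶ X} {y : D ⟶ Y} {z : D ⟶ Z}
    (h1 : R.Mem x y) (h2 : S.Mem y z) : T.Mem x z := by
  obtain ⟨P, p₁, p₂, e, hP, -, hp, hq⟩ := hT
  obtain ⟨a, rfl, rfl⟩ := h1
  obtain ⟨b, hb, rfl⟩ := h2
  obtain ⟨w, ⟨hw1, hw2⟩, -⟩ := hP.lift a b hb.symm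
  refine ⟨w ≫ e, ?_, ?_⟩
  · rw [Category.assoc, hp, ← Category.assoc, hw1]
  · rw [Category.assoc, hq, ← Category.assoc, hw2]

/-- To show that elements of a composite satisfy a (pulled back) relation `N`,
it suffices to do so for elements with an actual intermediate witness. -/
theorem comp_elim (hC : IsRegularOrd C) {X Y Z U V : C} {R : RelStr X Y} {S : RelStr Y Z}
    {T : RelStr X Z} (hT : IsCompositeRel R S T) (N : RelStr U V) (a : X ⟶ U) (b : Z ⟶ V)
    (key : ∀ {D : C} (x : D ⟶ X) (y : D ⟶ Y) (z : D ⟶ Z), R.Mem x y → S.Mem y z →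
      N.Mem (x ≫ a) (z ≫ b)) : N.Mem (T.p ≫ a) (T.q ≫ b) := by
  obtain ⟨P, p₁, p₂, e, hP, he, hp, hq⟩ := hT
  apply mem_of_so hC N e he
  rw [← Category.assoc, hp, ← Category.assoc, hq]
  exact key _ (p₁ ≫ R.q) _ ⟨p₁, rfl, rfl⟩ ⟨p₂, hP.comm.symm, rfl⟩


theorem comp_sub_meet (hC : IsRegularOrd C) {X Y Z : C} {M R S : RelStr X Y}
    {G : RelStr Y Z} {T1 T2 T3 N : RelStr X Z} (h1 : M.Sub R) (h2 : M.Sub S)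
    (hT1 : IsCompositeRel M G T1) (hT2 : IsCompositeRel R G T2) (hT3 : IsCompositeRel S G T3)
    (hN : IsMeetRel T2 T3 N) : T1.Sub N := by
  have := comp_elim hC hT1 N (𝟙 _) (𝟙 _) (fun x y z ha hb => by
    simpa using hN.2.2 x z (comp_mem hT2 (h1.mem ha) hb) (comp_mem hT3 (h2.mem ha) hb))
  simpa [RelStr.Mem, RelStr.Sub] using this

theorem comp_sub_meet' (hC : IsRegularOrd C) {X Y Z : C} {M R S : RelStr Y Z}
    {G : RelStr X Y} {T1 T2 T3 N : RelStr X Z} (h1 : M.Sub R) (h2 : M.Sub S)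
    (hT1 : IsCompositeRel G M T1) (hT2 : IsCompositeRel G R T2) (hT3 : IsCompositeRel G S T3)
    (hN : IsMeetRel T2 T3 N) : T1.Sub N := by
  have := comp_elim hC hT1 N (𝟙 _) (𝟙 _) (fun x y z ha hb => by
    simpa using hN.2.2 x z (comp_mem hT2 ha (h1.mem hb)) (comp_mem hT3 ha (h2.mem hb)))
  simpa [RelStr.Mem, RelStr.Sub] using this

theorem costar_mem {X Y : C} {g : X ⟶ Y} {G : RelStr Y X} (hG : IsCostarRel g G) {D : C}
    {y : D ⟶ Y} {x : D ⟶ X} : G.Mem y x ↔ y ≼ x ≫ g := by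
  constructor
  · rintro ⟨t, rfl, rfl⟩
    have := OrdEnrichment.precomp_ord t hG.le
    simpa [homLe] using this
  · intro hle
    obtain ⟨t, ht, -⟩ := hG.lift y x (by simpa using hle)
    exact ⟨t, ht⟩

theorem star_mem {X Y : C} {f : X ⟶ Y} {F : RelStr X Y} (hF : IsStarRel f F) {D : C}
    {x : D ⟶ X} {y : D ⟶ Y} : F.Mem x y ↔ x ≫ f ≼ y := by
  constructor
  · rintro ⟨t, rfl, rfl⟩
    have := OrdEnrichment.precomp_ord t hF.le
    simpa [homLe] using this
  · intro hle
    obtain ⟨t, ht, -⟩ := hF.lift x y (by simpa using hle)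
    exact ⟨t, ht⟩

theorem costar_comp (hC : IsRegularOrd C) {X Y B : C} {R : RelStr X Y} (hR : IsIdealRel R)
    {g : B ⟶ Y} {G : RelStr Y B} (hG : IsCostarRel g G) {T : RelStr X B}
    (hT : IsCompositeRel R G T) {D : C} {x : D ⟶ X} {b : D ⟶ B} (hm : T.Mem x b) :
    R.Mem x (b ≫ g) := by
  have := comp_elim hC hT R (𝟙 _) g (fun x y z ha hb =>
    hR x _ y _ (by simpa [homLe] using OrdEnrichment.ord_refl x) ha ((costar_mem hG).1 hb))
  obtain ⟨t, rfl, rfl⟩ := hm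
  simpa using this.precomp t

theorem star_comp (hC : IsRegularOrd C) {X Y A : C} {R : RelStr X Y} (hR : IsIdealRel R)
    {f : A ⟶ X} {F : RelStr A X} (hF : IsStarRel f F) {T : RelStr A Y}
    (hT : IsCompositeRel F R T) {D : C} {a : D ⟶ A} {y : D ⟶ Y} (hm : T.Mem a y) :
    R.Mem (a ≫ f) y := by
  have := comp_elim hC hT R f (𝟙 _) (fun x y z ha hb =>
    hR y _ z _ ((star_mem hF).1 ha) hb (by simpa [homLe] using OrdEnrichment.ord_refl z))
  obtain ⟨t, rfl, rfl⟩ := hm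
  simpa using this.precomp t

end helpers

/-- Distribution of composition with comma-object ideals over meets of ideals. -/
theorem statement4 {C : Type u} [Category.{v} C] [OrdEnrichment C] (hC : IsRegularOrd C)
    {X Y A B : C} (R S : RelStr X Y) (hR : IsIdealRel R) (hS : IsIdealRel S)
    (g : B ⟶ Y) (f : A ⟶ X) (k : Y ⟶ B) (h : X ⟶ A)
    (Gco : RelStr Y B) (hGco : IsCostarRel g Gco)
    (Fstar : RelStr A X) (hFstar : IsStarRel f Fstar)
    (Kstar : RelStr Y B) (hKstar : IsStarRel k Kstar)
    (Hco : RelStr A X) (hHco : IsCostarRel h Hco)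
    (M : RelStr X Y) (hM : IsMeetRel R S M) :
    -- (1) `g^* ∘ (R ∧ S) ≅ (g^* ∘ R) ∧ (g^* ∘ S)`
    (∀ (T1 : RelStr X B) (T2 : RelStr X B) (T3 : RelStr X B) (N : RelStr X B),
      IsCompositeRel M Gco T1 → IsCompositeRel R Gco T2 → IsCompositeRel S Gco T3 →
      IsMeetRel T2 T3 N → T1.Iso N) ∧
    -- (2) `(R ∧ S) ∘ f_* ≅ (R ∘ f_*) ∧ (S ∘ f_*)`
    (∀ (T1 : RelStr A Y) (T2 : RelStr A Y) (T3 : RelStr A Y) (N : RelStr A Y),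
      IsCompositeRel Fstar M T1 → IsCompositeRel Fstar R T2 → IsCompositeRel Fstar S T3 →
      IsMeetRel T2 T3 N → T1.Iso N) ∧
    -- (3) `k_* ∘ (R ∧ S) ⊆ (k_* ∘ R) ∧ (k_* ∘ S)`
    (∀ (T1 : RelStr X B) (T2 : RelStr X B) (T3 : RelStr X B) (N : RelStr X B),
      IsCompositeRel M Kstar T1 → IsCompositeRel R Kstar T2 → IsCompositeRel S Kstar T3 →
      IsMeetRel T2 T3 N → T1.Sub N) ∧
    -- (4) `(R ∧ S) ∘ h^* ⊆ (R ∘ h^*) ∧ (S ∘ h^*)`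
    (∀ (T1 : RelStr A Y) (T2 : RelStr A Y) (T3 : RelStr A Y) (N : RelStr A Y),
      IsCompositeRel Hco M T1 → IsCompositeRel Hco R T2 → IsCompositeRel Hco S T3 →
      IsMeetRel T2 T3 N → T1.Sub N) := by
  refine ⟨?_, ?_, ?_, ?_⟩
  · intro T1 T2 T3 N h1 h2 h3 hN
    refine ⟨comp_sub_meet hC hM.1 hM.2.1 h1 h2 h3 hN, ?_⟩
    have hn : N.Mem N.p N.q := ⟨𝟙 _, by simp, by simp⟩
    exact comp_mem h1 (hM.2.2 _ _ (costar_comp hC hR hGco h2 (hN.1.mem hn))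
      (costar_comp hC hS hGco h3 (hN.2.1.mem hn)))
      ((costar_mem hGco).2 (OrdEnrichment.ord_refl _))
  · intro T1 T2 T3 N h1 h2 h3 hN
    refine ⟨comp_sub_meet' hC hM.1 hM.2.1 h1 h2 h3 hN, ?_⟩
    have hn : N.Mem N.p N.q := ⟨𝟙 _, by simp, by simp⟩
    exact comp_mem h1 ((star_mem hFstar).2 (OrdEnrichment.ord_refl _))
      (hM.2.2 _ _ (star_comp hC hR hFstar h2 (hN.1.mem hn))
        (star_comp hC hS hFstar h3 (hN.2.1.mem hn)))
  · intro T1 T2 T3 N h1 h2 h3 hN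
    exact comp_sub_meet hC hM.1 hM.2.1 h1 h2 h3 hN
  · intro T1 T2 T3 N h1 h2 h3 hN
    exact comp_sub_meet' hC hM.1 hM.2.1 h1 h2 h3 hN
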